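/- For every positive integer k ≥ 2 and every real y > k, the sum over all integers n ≥ 1 whose smallest prime factor exceeds y of d_k(n²)/n² equals exp(O(k²/(y log y))), where d_k denotes the k-th divisor function. -/

import Mathlib

/-- The `k`-th divisor function: the number of ways to write `n` as an ordered
product of `k` positive integers. -/
def dk (k n : ℕ) : ℕ :=
  Fintype.card {f : Fin k → Fin (n + 1) // ∏ i, ((f i : ℕ)) = n}

/-!
The function `d_k` is submultiplicative and `d_k(p²) = k(k+1)/2 =: D`, so `d_k(n²) ≤ D ^ Ω(n)`. On
the integers free of prime factors `≤ y`, the sum is therefore at most the Euler product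
`∏_{p > y} (1 - D/p²)⁻¹`. As `p > y > k` forces `D/p² ≤ 1/2`, each factor is at most `exp(2D/p²)`,
and Chebyshev's bound `θ(x) ≪ x` on dyadic blocks gives `∑_{p > y} 1/p² ≪ 1/(y log y)`.
The lower bound is the term `n = 1`.
-/

section DivisorFunction

theorem exists_dvd_and_prod_eq_of_dvd_prod {ι M : Type*} [CommMonoid M] [Subsingleton Mˣ]
    [DecompositionMonoid M] {s : Finset ι} {f : ι → M} {a : M} (h : a ∣ ∏ i ∈ s, f i) :
    ∃ g : ι → M, (∀ i ∈ s, g i ∣ f i) ∧ ∏ i ∈ s, g i = a := by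
  classical
  induction s using Finset.induction_on generalizing a with
  | empty => exact ⟨1, by simp, (isUnit_iff_eq_one.1 (isUnit_of_dvd_one (by simpa using h))).symm⟩
  | insert j s hj ih =>
    rw [Finset.prod_insert hj] at h
    obtain ⟨b, c, hb, hc, rfl⟩ := exists_dvd_and_dvd_of_dvd_mul h
    obtain ⟨g, hgf, rfl⟩ := ih hc
    have update_eq : ∀ i ∈ s, Function.update g j b i = g i := fun i hi ↦
      Function.update_of_ne (ne_of_mem_of_not_mem hi hj) b g
    refine ⟨Function.update g j b, ?_, ?_⟩
    · rw [Finset.forall_mem_insert, Function.update_self]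
      exact ⟨hb, fun i hi ↦ update_eq i hi ▸ hgf i hi⟩
    · rw [Finset.prod_insert hj, Function.update_self, Finset.prod_congr rfl update_eq]

theorem dk_eq_card_finMulAntidiag (k : ℕ) {n : ℕ} (hn : n ≠ 0) :
    dk k n = (Nat.finMulAntidiag k n).card := by
  have lt_succ {f : Fin k → ℕ} (hf : f ∈ Nat.finMulAntidiag k n) (i : Fin k) : f i < n + 1 :=
    Nat.lt_succ_of_le (Nat.le_of_dvd hn.bot_lt (Nat.dvd_of_mem_finMulAntidiag hf i))
  rw [dk, ← Fintype.card_coe]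
  exact Fintype.card_congr
    { toFun f := ⟨fun i ↦ f.1 i, Nat.mem_finMulAntidiag.2 ⟨f.2, hn⟩⟩
      invFun f := ⟨fun i ↦ ⟨f.1 i, lt_succ f.2 i⟩, Nat.prod_eq_of_mem_finMulAntidiag f.2⟩ }

theorem dk_one (k : ℕ) : dk k 1 = 1 := by
  rw [dk_eq_card_finMulAntidiag k one_ne_zero, Nat.finMulAntidiag_one, Finset.card_singleton]

theorem dk_mul_le (k : ℕ) {a b : ℕ} (ha : a ≠ 0) (hb : b ≠ 0) :
    dk k (a * b) ≤ dk k a * dk k b := by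
  rw [dk_eq_card_finMulAntidiag k ha, dk_eq_card_finMulAntidiag k hb,
    dk_eq_card_finMulAntidiag k (mul_ne_zero ha hb), ← Finset.card_product]
  refine Finset.card_le_card_of_surjOn (fun x ↦ x.1 * x.2) fun f hf ↦ ?_
  have hprod : ∏ i, f i = a * b := Nat.prod_eq_of_mem_finMulAntidiag (Finset.mem_coe.1 hf)
  obtain ⟨g, hgf, hg⟩ := exists_dvd_and_prod_eq_of_dvd_prod (Dvd.intro b hprod.symm)
  choose h hgh using fun i ↦ hgf i (Finset.mem_univ i)
  have hh : ∏ i, h i = b := by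
    refine Nat.eq_of_mul_eq_mul_left ha.bot_lt ?_
    rw [← hprod, ← hg, ← Finset.prod_mul_distrib]
    exact Finset.prod_congr rfl fun i _ ↦ (hgh i).symm
  exact ⟨(g, h), by simp [Nat.mem_finMulAntidiag, hg, hh, ha, hb], (funext hgh).symm⟩

theorem dk_prime_pow (k m : ℕ) {p : ℕ} (hp : p.Prime) : dk k (p ^ m) = k.multichoose m := by
  have card_exponents : (Finset.univ.finsuppAntidiag m : Finset (Fin k →₀ ℕ)).card =
      k.multichoose m := by
    rw [Finset.card_finsuppAntidiag_nat_eq_multichoose, Finset.card_univ, Fintype.card_fin]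
  rw [dk_eq_card_finMulAntidiag k (pow_ne_zero m hp.ne_zero), ← card_exponents]
  symm
  refine Finset.card_nbij (fun e i ↦ p ^ e i) ?_ ?_ ?_
  · intro e he
    have he' : ∑ i, e i = m := (Finset.mem_finsuppAntidiag.1 he).1
    simp [Nat.mem_finMulAntidiag, Finset.prod_pow_eq_pow_sum, he', hp.ne_zero]
  · intro e _ e' _ h
    ext i
    exact Nat.pow_right_injective hp.two_le (congrFun h i)
  · intro f hf
    have hprod : ∏ i, f i = p ^ m := Nat.prod_eq_of_mem_finMulAntidiag hf
    choose e _ hfe using fun i ↦ (Nat.dvd_prime_pow hp).1 (Nat.dvd_of_mem_finMulAntidiag hf i)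
    obtain rfl : f = fun i ↦ p ^ e i := funext hfe
    have he : ∑ i, e i = m :=
      Nat.pow_right_injective hp.two_le (by simpa [Finset.prod_pow_eq_pow_sum] using hprod)
    exact ⟨Finsupp.equivFunOnFinite.symm e, by simp [Finset.mem_finsuppAntidiag, he], rfl⟩

theorem dk_pow_le (k m : ℕ) {n : ℕ} (hn : n ≠ 0) :
    dk k (n ^ m) ≤ k.multichoose m ^ ArithmeticFunction.cardFactors n := by
  induction n using induction_on_primes with
  | zero => exact absurd rfl hn
  | one => simp [dk_one]
  | prime_mul p a hp ih =>
    have ha : a ≠ 0 := right_ne_zero_of_mul hn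
    calc dk k ((p * a) ^ m) = dk k (p ^ m * a ^ m) := by rw [mul_pow]
      _ ≤ dk k (p ^ m) * dk k (a ^ m) :=
        dk_mul_le k (pow_ne_zero m hp.ne_zero) (pow_ne_zero m ha)
      _ ≤ k.multichoose m * k.multichoose m ^ ArithmeticFunction.cardFactors a :=
        Nat.mul_le_mul (dk_prime_pow k m hp).le (ih ha)
      _ = k.multichoose m ^ ArithmeticFunction.cardFactors (p * a) := by
        rw [ArithmeticFunction.cardFactors_mul hp.ne_zero ha,
          ArithmeticFunction.cardFactors_apply_prime hp, pow_add, pow_one]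

theorem two_mul_multichoose_two (k : ℕ) : 2 * k.multichoose 2 = k * (k + 1) := by
  rw [Nat.multichoose_eq, show k + 2 - 1 = k + 1 from rfl, Nat.choose_two_right,
    Nat.mul_div_cancel' (Nat.even_mul_pred_self (k + 1)).two_dvd, Nat.add_sub_cancel, mul_comm]

end DivisorFunction

section PrimeTail

open Real

theorem sum_log_div_sq_Ioc_two_mul_le {x : ℝ} (hx : 0 < x) :
    ∑ p ∈ Finset.Ioc ⌊x⌋₊ ⌊2 * x⌋₊ with p.Prime, log p / (p : ℝ) ^ 2 ≤ 2 * log 4 / x := by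
  calc ∑ p ∈ Finset.Ioc ⌊x⌋₊ ⌊2 * x⌋₊ with p.Prime, log p / (p : ℝ) ^ 2
      ≤ ∑ p ∈ Finset.Ioc ⌊x⌋₊ ⌊2 * x⌋₊ with p.Prime, log p / x ^ 2 := by
        refine Finset.sum_le_sum fun p hp ↦ ?_
        have hxp : x < p := Nat.lt_of_floor_lt (Finset.mem_Ioc.1 (Finset.mem_filter.1 hp).1).1
        gcongr
    _ ≤ ∑ p ∈ Finset.Ioc 0 ⌊2 * x⌋₊ with p.Prime, log p / x ^ 2 := by
        refine Finset.sum_le_sum_of_subset_of_nonneg ?_ fun p _ _ ↦ by positivity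
        gcongr
        exact Nat.zero_le _
    _ = Chebyshev.theta (2 * x) / x ^ 2 := by rw [Chebyshev.theta, Finset.sum_div]
    _ ≤ log 4 * (2 * x) / x ^ 2 := by
        gcongr
        exact Chebyshev.theta_le_log4_mul_x (by positivity)
    _ = 2 * log 4 / x := by field_simp

theorem sum_log_div_sq_Ioc_two_pow_mul_le {x : ℝ} (hx : 0 < x) (J : ℕ) :
    ∑ p ∈ Finset.Ioc ⌊x⌋₊ ⌊2 ^ J * x⌋₊ with p.Prime, log p / (p : ℝ) ^ 2 ≤ 4 * log 4 / x := by
  induction J generalizing x with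
  | zero => simpa using by positivity
  | succ J ih =>
    have h₁ : ⌊x⌋₊ ≤ ⌊2 * x⌋₊ := Nat.floor_le_floor (by linarith)
    have h₂ : ⌊2 * x⌋₊ ≤ ⌊2 ^ J * (2 * x)⌋₊ :=
      Nat.floor_le_floor (le_mul_of_one_le_left (by positivity) (one_le_pow₀ one_le_two))
    rw [pow_succ, mul_assoc, ← Finset.Ioc_union_Ioc_eq_Ioc h₁ h₂, Finset.filter_union,
      Finset.sum_union (Finset.disjoint_filter_filter (Finset.Ioc_disjoint_Ioc_of_le le_rfl))]
    calc _ ≤ 2 * log 4 / x + 4 * log 4 / (2 * x) :=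
          add_le_add (sum_log_div_sq_Ioc_two_mul_le hx) (ih (by positivity))
      _ = 4 * log 4 / x := by field_simp; ring

theorem sum_one_div_sq_primesBelow_le {y : ℝ} (hy : 1 < y) (N : ℕ) :
    ∑ p ∈ N.primesBelow with y < (p : ℕ), 1 / (p : ℝ) ^ 2 ≤ 4 * log 4 / (y * log y) := by
  have hy₀ : 0 < y := one_pos.trans hy
  have hlog : 0 < log y := log_pos hy
  have hN : (N : ℝ) ≤ 2 ^ N * y := by
    have : (N : ℝ) ≤ 2 ^ N := by exact_mod_cast Nat.lt_two_pow_self.le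
    nlinarith
  calc ∑ p ∈ N.primesBelow with y < (p : ℕ), 1 / (p : ℝ) ^ 2
      ≤ ∑ p ∈ N.primesBelow with y < (p : ℕ), log p / (p : ℝ) ^ 2 / log y := by
        refine Finset.sum_le_sum fun p hp ↦ ?_
        have hyp : log y ≤ log p := log_le_log hy₀ (Finset.mem_filter.1 hp).2.le
        rw [div_right_comm]
        gcongr
        rwa [one_le_div hlog]
    _ ≤ ∑ p ∈ Finset.Ioc ⌊y⌋₊ ⌊2 ^ N * y⌋₊ with p.Prime, log p / (p : ℝ) ^ 2 / log y := by
        refine Finset.sum_le_sum_of_subset_of_nonneg (fun p hp ↦ ?_) fun p _ _ ↦ by positivity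
        simp only [Finset.mem_filter, Nat.mem_primesBelow, Finset.mem_Ioc] at hp ⊢
        obtain ⟨⟨hpN, hp⟩, hyp⟩ := hp
        have hpN' : (p : ℝ) ≤ N := by exact_mod_cast hpN.le
        exact ⟨⟨(Nat.floor_lt hy₀.le).2 hyp, Nat.le_floor (hpN'.trans hN)⟩, hp⟩
    _ ≤ 4 * log 4 / y / log y := by
        rw [← Finset.sum_div]
        gcongr
        exact sum_log_div_sq_Ioc_two_pow_mul_le hy₀ N
    _ = 4 * log 4 / (y * log y) := div_div _ _ _

end PrimeTail

section CompletelyMultiplicative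

theorem inv_one_sub_le_exp_two_mul {t : ℝ} (ht₀ : 0 ≤ t) (ht : t ≤ 1 / 2) :
    (1 - t)⁻¹ ≤ Real.exp (2 * t) := by
  refine le_trans ?_ (Real.add_one_le_exp _)
  rw [inv_le_iff_one_le_mul₀ (by linarith)]
  nlinarith

theorem sum_le_exp_of_sum_primesBelow_le {f : ℕ →*₀ ℝ} {B : ℝ} (hf₀ : ∀ n, 0 ≤ f n)
    (hf : ∀ p : ℕ, p.Prime → f p ≤ 1 / 2) (hB : ∀ N : ℕ, ∑ p ∈ N.primesBelow, f p ≤ B)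
    (u : Finset ℕ) : ∑ n ∈ u, f n ≤ Real.exp (2 * B) := by
  set N := u.sup id + 1
  have hsmooth : ∀ n ∈ u, f n ≤ Set.indicator N.smoothNumbers f n := by
    intro n hn
    rcases Nat.eq_zero_or_pos n with rfl | hpos
    · simpa using Set.indicator_nonneg (fun n _ ↦ hf₀ n) 0
    · rw [Set.indicator_of_mem (Nat.mem_smoothNumbers_of_lt hpos
        (Nat.lt_succ_of_le (Finset.le_sup (f := id) hn)))]
  have hasSum_smooth : HasSum (Set.indicator N.smoothNumbers f)
      (∏ p ∈ N.primesBelow, (1 - f p)⁻¹) := by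
    refine hasSum_subtype_iff_indicator.1
      (EulerProduct.summable_and_hasSum_smoothNumbers_prod_primesBelow_geometric
        (f := (f : ℕ →* ℝ)) (fun {p} hp ↦ ?_) N).2
    have := hf p hp
    simpa [abs_of_nonneg (hf₀ p)] using by linarith
  calc ∑ n ∈ u, f n ≤ ∑ n ∈ u, Set.indicator N.smoothNumbers f n := Finset.sum_le_sum hsmooth
    _ ≤ ∏ p ∈ N.primesBelow, (1 - f p)⁻¹ :=
      sum_le_hasSum u (fun n _ ↦ Set.indicator_nonneg (fun n _ ↦ hf₀ n) n) hasSum_smooth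
    _ ≤ ∏ p ∈ N.primesBelow, Real.exp (2 * f p) := by
      refine Finset.prod_le_prod (fun p hp ↦ ?_) fun p hp ↦
        inv_one_sub_le_exp_two_mul (hf₀ p) (hf p (Nat.prime_of_mem_primesBelow hp))
      have := hf p (Nat.prime_of_mem_primesBelow hp)
      exact inv_nonneg.2 (by linarith)
    _ = Real.exp (2 * ∑ p ∈ N.primesBelow, f p) := by rw [Finset.mul_sum, Real.exp_sum]
    _ ≤ Real.exp (2 * B) := by gcongr; exact hB N

end CompletelyMultiplicative

section RoughNumbers

/-- The `y`-rough numbers: the positive integers with no prime factor `≤ y`. -/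
def roughNumbers (y : ℝ) : Set ℕ :=
  {n | 1 ≤ n ∧ ∀ p : ℕ, p.Prime → p ∣ n → y < p}

variable {y : ℝ}

theorem one_mem_roughNumbers : 1 ∈ roughNumbers y :=
  ⟨le_rfl, fun _ hp h ↦ absurd (Nat.dvd_one.1 h) hp.ne_one⟩

theorem prime_mem_roughNumbers {p : ℕ} (hp : p.Prime) : p ∈ roughNumbers y ↔ y < p := by
  refine ⟨fun h ↦ h.2 p hp dvd_rfl, fun h ↦ ⟨hp.one_le, fun q hq hqp ↦ ?_⟩⟩
  rwa [(Nat.prime_dvd_prime_iff_eq hq hp).1 hqp]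

theorem mul_mem_roughNumbers {a b : ℕ} :
    a * b ∈ roughNumbers y ↔ a ∈ roughNumbers y ∧ b ∈ roughNumbers y := by
  simp only [roughNumbers, Set.mem_ofPred_eq, Nat.one_le_iff_ne_zero, mul_ne_zero_iff]
  refine ⟨fun ⟨⟨ha, hb⟩, h⟩ ↦ ⟨⟨ha, fun p hp hpa ↦ h p hp (hpa.mul_right b)⟩,
    ⟨hb, fun p hp hpb ↦ h p hp (hpb.mul_left a)⟩⟩, fun ⟨⟨ha, ha'⟩, hb, hb'⟩ ↦
    ⟨⟨ha, hb⟩, fun p hp hpab ↦ (hp.dvd_mul.1 hpab).elim (ha' p hp) (hb' p hp)⟩⟩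

/-- The completely multiplicative function supported on the `y`-rough numbers whose value at each
prime `p > y` is `D / p²`. -/
noncomputable def roughMajorant (D y : ℝ) : ℕ →*₀ ℝ where
  toFun := (roughNumbers y).indicator
    fun n ↦ D ^ ArithmeticFunction.cardFactors n / (n : ℝ) ^ 2
  map_zero' := Set.indicator_of_notMem (fun h ↦ absurd h.1 (by decide)) _
  map_one' := by simp [Set.indicator_of_mem one_mem_roughNumbers]
  map_mul' a b := by
    by_cases ha : a ∈ roughNumbers y
    · by_cases hb : b ∈ roughNumbers y
      · rw [Set.indicator_of_mem ha, Set.indicator_of_mem hb,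
          Set.indicator_of_mem (mul_mem_roughNumbers.2 ⟨ha, hb⟩),
          ArithmeticFunction.cardFactors_mul (Nat.one_le_iff_ne_zero.1 ha.1)
            (Nat.one_le_iff_ne_zero.1 hb.1), pow_add, Nat.cast_mul, mul_pow, mul_div_mul_comm]
      · simp [hb, mul_mem_roughNumbers]
    · simp [ha, mul_mem_roughNumbers]

theorem roughMajorant_apply (D : ℝ) (n : ℕ) :
    roughMajorant D y n =
      (roughNumbers y).indicator (fun n ↦ D ^ ArithmeticFunction.cardFactors n / (n : ℝ) ^ 2) n :=
  rfl

theorem roughMajorant_nonneg {D : ℝ} (hD : 0 ≤ D) (n : ℕ) : 0 ≤ roughMajorant D y n := by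
  rw [roughMajorant_apply]
  exact Set.indicator_nonneg (fun _ _ ↦ by positivity) n

theorem roughMajorant_prime (D : ℝ) {p : ℕ} (hp : p.Prime) :
    roughMajorant D y p = if y < p then D / (p : ℝ) ^ 2 else 0 := by
  classical
  simp [roughMajorant_apply, Set.indicator_apply, prime_mem_roughNumbers hp,
    ArithmeticFunction.cardFactors_apply_prime hp]

theorem sum_primesBelow_roughMajorant_le {D : ℝ} (hD : 0 ≤ D) (hy : 1 < y) (N : ℕ) :
    ∑ p ∈ N.primesBelow, roughMajorant D y p ≤ D * (4 * Real.log 4 / (y * Real.log y)) := by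
  calc ∑ p ∈ N.primesBelow, roughMajorant D y p
      = D * ∑ p ∈ N.primesBelow with y < (p : ℕ), 1 / (p : ℝ) ^ 2 := by
        rw [Finset.sum_filter, Finset.mul_sum]
        refine Finset.sum_congr rfl fun p hp ↦ ?_
        rw [roughMajorant_prime D (Nat.prime_of_mem_primesBelow hp), mul_ite, mul_zero,
          mul_one_div]
    _ ≤ D * (4 * Real.log 4 / (y * Real.log y)) := by
        gcongr
        exact sum_one_div_sq_primesBelow_le hy N

end RoughNumbers

section RoughDivisorSum

/-- The summand `d_k(n²) / n²`, extended by zero from the `y`-rough numbers to all of `ℕ`. -/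
noncomputable def roughDivisorTerm (k : ℕ) (y : ℝ) : ℕ → ℝ :=
  (roughNumbers y).indicator fun n ↦ (dk k (n ^ 2) : ℝ) / (n : ℝ) ^ 2

variable {k : ℕ} {y : ℝ}

theorem roughDivisorTerm_nonneg (n : ℕ) : 0 ≤ roughDivisorTerm k y n :=
  Set.indicator_nonneg (fun _ _ ↦ by positivity) n

theorem roughDivisorTerm_one : roughDivisorTerm k y 1 = 1 := by
  simp [roughDivisorTerm, Set.indicator_of_mem one_mem_roughNumbers, dk_one]

theorem roughDivisorTerm_le_roughMajorant (n : ℕ) :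
    roughDivisorTerm k y n ≤ roughMajorant (k.multichoose 2) y n := by
  rw [roughMajorant_apply]
  refine Set.indicator_le_indicator' fun hn ↦ ?_
  gcongr
  exact_mod_cast dk_pow_le k 2 (Nat.one_le_iff_ne_zero.1 hn.1)

theorem roughMajorant_multichoose_two_prime_le_half (hky : k < y) {p : ℕ} (hp : p.Prime) :
    roughMajorant (k.multichoose 2) y p ≤ 1 / 2 := by
  rw [roughMajorant_prime _ hp]
  split_ifs with hyp
  · have hkp : k + 1 ≤ p := by exact_mod_cast hky.trans hyp
    have hsq : 2 * k.multichoose 2 ≤ p ^ 2 := by rw [two_mul_multichoose_two]; nlinarith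
    have hp₀ : (0 : ℝ) < p := by exact_mod_cast hp.pos
    rw [div_le_div_iff₀ (by positivity) two_pos]
    exact_mod_cast (by linarith)
  · norm_num

theorem sum_roughDivisorTerm_le (hy : 1 < y) (hky : k < y) (u : Finset ℕ) :
    ∑ n ∈ u, roughDivisorTerm k y n ≤
      Real.exp (8 * Real.log 4 * k ^ 2 / (y * Real.log y)) := by
  have hD₀ : (0 : ℝ) ≤ k.multichoose 2 := Nat.cast_nonneg _
  have hD : (k.multichoose 2 : ℝ) ≤ k ^ 2 := by
    have := two_mul_multichoose_two k
    exact_mod_cast (by nlinarith : k.multichoose 2 ≤ k ^ 2)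
  have hlog : 0 < Real.log y := Real.log_pos hy
  calc ∑ n ∈ u, roughDivisorTerm k y n ≤ ∑ n ∈ u, roughMajorant (k.multichoose 2) y n :=
        Finset.sum_le_sum fun n _ ↦ roughDivisorTerm_le_roughMajorant n
    _ ≤ Real.exp (2 * (k.multichoose 2 * (4 * Real.log 4 / (y * Real.log y)))) :=
        sum_le_exp_of_sum_primesBelow_le (roughMajorant_nonneg hD₀)
          (fun _ ↦ roughMajorant_multichoose_two_prime_le_half hky)
          (sum_primesBelow_roughMajorant_le hD₀ hy) u
    _ ≤ Real.exp (2 * (k ^ 2 * (4 * Real.log 4 / (y * Real.log y)))) := by gcongr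
    _ = Real.exp (8 * Real.log 4 * k ^ 2 / (y * Real.log y)) := by ring_nf

theorem summable_roughDivisorTerm (hy : 1 < y) (hky : k < y) : Summable (roughDivisorTerm k y) :=
  summable_of_sum_le roughDivisorTerm_nonneg (sum_roughDivisorTerm_le hy hky)

theorem one_le_tsum_roughDivisorTerm (hy : 1 < y) (hky : k < y) :
    1 ≤ ∑' n, roughDivisorTerm k y n :=
  roughDivisorTerm_one.ge.trans
    ((summable_roughDivisorTerm hy hky).le_tsum 1 fun n _ ↦ roughDivisorTerm_nonneg n)

theorem tsum_roughDivisorTerm_le (hy : 1 < y) (hky : k < y) :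
    ∑' n, roughDivisorTerm k y n ≤ Real.exp (8 * Real.log 4 * k ^ 2 / (y * Real.log y)) :=
  Real.tsum_le_of_sum_le roughDivisorTerm_nonneg (sum_roughDivisorTerm_le hy hky)

end RoughDivisorSum

/-- For every integer `k ≥ 2` and real `y > k`, the sum of `d_k(n²)/n²` over the
integers `n` all of whose prime factors exceed `y` is `exp(O(k²/(y log y)))`. -/
theorem stmt_2 :
    ∃ C > 0, ∀ (k : ℕ), 2 ≤ k → ∀ (y : ℝ), (k : ℝ) < y →
      Real.exp (-(C * k ^ 2 / (y * Real.log y))) ≤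
        (∑' n : ℕ, Set.indicator {n : ℕ | 1 ≤ n ∧ ∀ p : ℕ, p.Prime → p ∣ n → y < p}
          (fun n => (dk k (n ^ 2) : ℝ) / (n : ℝ) ^ 2) n) ∧
      (∑' n : ℕ, Set.indicator {n : ℕ | 1 ≤ n ∧ ∀ p : ℕ, p.Prime → p ∣ n → y < p}
          (fun n => (dk k (n ^ 2) : ℝ) / (n : ℝ) ^ 2) n) ≤
        Real.exp (C * k ^ 2 / (y * Real.log y)) := by
  refine ⟨8 * Real.log 4, by positivity, fun k hk y hky ↦ ?_⟩
  have hy : 1 < y := lt_of_lt_of_le (by exact_mod_cast hk) hky.le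
  have hlog : 0 < Real.log y := Real.log_pos hy
  have hexp : Real.exp (-(8 * Real.log 4 * k ^ 2 / (y * Real.log y))) ≤ 1 :=
    Real.exp_le_one_iff.2 (neg_nonpos.2 (by positivity))
  exact ⟨hexp.trans (one_le_tsum_roughDivisorTerm hy hky), tsum_roughDivisorTerm_le hy hky⟩
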